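/- arXiv:2209.10400 — 4 statements merged into one kernel-verified Lean document; each statement's English description precedes it below -/
import Mathlib

section
/- Let T be a finite tree rooted at r and let p ≥ 2·h(T). In every optimal solution 𝓘 of the Min-Distance problem (a feasible covering minimizing the total cost Σ_{I∈𝓘} C(I)), every leaf of every immersion I ∈ 𝓘 is a leaf of T. -/
/-!
In an optimal covering, a leaf `v` of an immersion `I` lies in no other immersion: otherwise `v`
could be deleted from `I`, which lowers the cost. On the other hand, a connected subgraph of an
acyclic graph is induced, every edge being a bridge. Let `w` be any `T`-neighbour of `v`, covered
by `J` say. The union `I ⊔ J` is connected through the root, so it contains the edge `vw`, and this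
edge lies in `I`, the only immersion that meets `v`. Hence `v` has the same neighbours in `T` as in
`I`.
-/

open SimpleGraph Finset

/-- Cost of a subgraph-immersion: twice the number of its edges. -/
noncomputable def immCost {V : Type*} {G : SimpleGraph V} (I : G.Subgraph) : ℕ :=
  2 * I.edgeSet.ncard

/-- An immersion is a connected subgraph of `G` containing the root `r`. -/
def IsImmersion {V : Type*} {G : SimpleGraph V} (r : V) (I : G.Subgraph) : Prop :=
  I.Connected ∧ r ∈ I.verts

/-- Height of the rooted tree: maximum distance from the root. -/
noncomputable def treeHeight {V : Type*} [Fintype V] (G : SimpleGraph V) (r : V) : ℕ :=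
  Finset.univ.sup (fun v => G.dist r v)

/-- A leaf of the rooted tree: a vertex `v ≠ r` of degree 1. -/
def IsTreeLeaf {V : Type*} (G : SimpleGraph V) (r v : V) : Prop :=
  v ≠ r ∧ (G.neighborSet v).ncard = 1

/-- A leaf of an immersion `I`: a vertex `v ≠ r` of degree 1 in `I`. -/
def IsImmLeaf {V : Type*} {G : SimpleGraph V} (r : V) (I : G.Subgraph) (v : V) : Prop :=
  v ≠ r ∧ (I.neighborSet v).ncard = 1

/-- A feasible covering: a finite set of immersions, each of cost at most `p`,
whose vertex sets cover all vertices. -/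
def IsFeasible {V : Type*} [Fintype V] {G : SimpleGraph V} (r : V) (p : ℕ)
    (𝓘 : Finset G.Subgraph) : Prop :=
  (∀ I ∈ 𝓘, IsImmersion r I ∧ immCost I ≤ p) ∧ (∀ v : V, ∃ I ∈ 𝓘, v ∈ I.verts)

/-- Total cost of a set of immersions. -/
noncomputable def totalCost {V : Type*} {G : SimpleGraph V} (𝓘 : Finset G.Subgraph) : ℕ :=
  ∑ I ∈ 𝓘, immCost I

/-- Optimality for the Min-Distance problem. -/
def MinDistOptimal {V : Type*} [Fintype V] {G : SimpleGraph V} (r : V) (p : ℕ)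
    (𝓘 : Finset G.Subgraph) : Prop :=
  IsFeasible r p 𝓘 ∧ ∀ 𝓙 : Finset G.Subgraph, IsFeasible r p 𝓙 → totalCost 𝓘 ≤ totalCost 𝓙

/-- Makespan (maximum collective time) of an assignment `a` of immersions to `k` robots. -/
noncomputable def makespan {V : Type*} {G : SimpleGraph V} (k : ℕ)
    (𝓘 : Finset G.Subgraph) (a : G.Subgraph → Fin k) : ℕ :=
  Finset.univ.sup (fun i : Fin k => ∑ I ∈ 𝓘.filter (fun I => a I = i), immCost I)

/-- Optimality for the Min-Time problem with `k` robots. -/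
def MinTimeOptimal {V : Type*} [Fintype V] {G : SimpleGraph V} (r : V) (p k : ℕ)
    (𝓘 : Finset G.Subgraph) (a : G.Subgraph → Fin k) : Prop :=
  IsFeasible r p 𝓘 ∧ ∀ (𝓙 : Finset G.Subgraph) (b : G.Subgraph → Fin k),
    IsFeasible r p 𝓙 → makespan k 𝓘 a ≤ makespan k 𝓙 b

/-- Optimality for the Min-Immersions problem. -/
def MinImmOptimal {V : Type*} [Fintype V] {G : SimpleGraph V} (r : V) (p : ℕ)
    (𝓘 : Finset G.Subgraph) : Prop :=
  IsFeasible r p 𝓘 ∧ ∀ 𝓙 : Finset G.Subgraph, IsFeasible r p 𝓙 → 𝓘.card ≤ 𝓙.card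

section Subgraph

variable {V : Type*} {G : SimpleGraph V}

lemma isInduced_of_isAcyclic_of_preconnected (hG : G.IsAcyclic) {H : G.Subgraph}
    (hH : H.Preconnected) : H.IsInduced := by
  intro v hv w hw hvw
  obtain ⟨q, hqH⟩ := H.preconnected_iff_forall_exists_walk_subgraph.1 hH hv hw
  have hbridge : G.IsBridge s(v, w) := isAcyclic_iff_forall_adj_isBridge.1 hG hvw
  have hvw_mem : s(v, w) ∈ q.edges := isBridge_iff_forall_walk_mem_edges.1 hbridge q
  exact hqH.2 (Walk.adj_toSubgraph_iff_mem_edges.2 hvw_mem)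

lemma preconnected_deleteVerts_of_subsingleton_neighborSet {H : G.Subgraph}
    (hH : H.Preconnected) {s : Set V} (hs : ∀ v ∈ s, (H.neighborSet v).Subsingleton) :
    (H.deleteVerts s).Preconnected := by
  have hinduce : (H.coe.induce {x : H.verts | (x : V) ∉ s}).Preconnected := by
    refine hH.coe.induce_of_degree_eq_one fun x hx a ha b hb ↦ ?_
    exact Subtype.ext (hs x (not_not.1 hx) ha hb)
  let toDelete : H.coe.induce {x : H.verts | (x : V) ∉ s} →g (H.deleteVerts s).coe :=
    { toFun x := ⟨x.1, x.1.2, x.2⟩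
      map_rel' {a b} hab := ⟨⟨a.1.2, a.2⟩, ⟨b.1.2, b.2⟩, hab⟩ }
  exact ⟨hinduce.map toDelete fun y ↦ ⟨⟨⟨y, y.2.1⟩, y.2.2⟩, rfl⟩⟩

lemma edgeSet_deleteVerts_singleton_ssubset {H : G.Subgraph} {v : V}
    (hv : (H.neighborSet v).Nonempty) : (H.deleteVerts {v}).edgeSet ⊂ H.edgeSet := by
  obtain ⟨u, hvu⟩ := hv
  refine ⟨Subgraph.edgeSet_mono Subgraph.deleteVerts_le, fun hle ↦ ?_⟩
  have hmem : s(v, u) ∈ (H.deleteVerts {v}).edgeSet := hle hvu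
  rw [Subgraph.mem_edgeSet, Subgraph.deleteVerts_adj] at hmem
  exact hmem.2.1 rfl

end Subgraph

section Immersion

variable {V : Type*} {G : SimpleGraph V} {r v : V} {I J : G.Subgraph}

lemma IsImmLeaf.nonempty_neighborSet (hv : IsImmLeaf r I v) : (I.neighborSet v).Nonempty :=
  Set.nonempty_of_ncard_ne_zero (hv.2 ▸ one_ne_zero)

lemma IsImmLeaf.mem_verts (hv : IsImmLeaf r I v) : v ∈ I.verts :=
  hv.nonempty_neighborSet.elim fun _ hvu ↦ I.edge_vert hvu

lemma IsImmersion.sup (hI : IsImmersion r I) (hJ : IsImmersion r J) : IsImmersion r (I ⊔ J) :=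
  ⟨Subgraph.connected_sup hI.1.preconnected hJ.1.preconnected ⟨r, hI.2, hJ.2⟩, Or.inl hI.2⟩

lemma IsImmersion.deleteVerts_leaf (hI : IsImmersion r I) (hv : IsImmLeaf r I v) :
    IsImmersion r (I.deleteVerts {v}) := by
  obtain ⟨hvr, hdeg⟩ := hv
  obtain ⟨u, hu⟩ := Set.ncard_eq_one.1 hdeg
  have hr : r ∈ (I.deleteVerts {v}).verts := ⟨hI.2, hvr.symm⟩
  have hpre : (I.deleteVerts {v}).Preconnected :=
    preconnected_deleteVerts_of_subsingleton_neighborSet hI.1.preconnected <| by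
      rintro _ rfl
      exact hu ▸ Set.subsingleton_singleton
  exact ⟨Subgraph.connected_iff.2 ⟨hpre, r, hr⟩, hr⟩

lemma immCost_lt_of_edgeSet_ssubset (hIJ : I.edgeSet ⊂ J.edgeSet) (hJ : J.edgeSet.Finite) :
    immCost I < immCost J :=
  Nat.mul_lt_mul_of_pos_left (Set.ncard_lt_ncard hIJ hJ) two_pos

end Immersion

section Covering

variable {V : Type*} {G : SimpleGraph V} {r v : V} {p : ℕ} {𝓘 : Finset G.Subgraph}
  {I I' J : G.Subgraph}

lemma totalCost_insert_le [DecidableEq G.Subgraph] :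
    totalCost (insert I 𝓘) ≤ immCost I + totalCost 𝓘 := by
  by_cases hI : I ∈ 𝓘
  · rw [insert_eq_of_mem hI]
    exact Nat.le_add_left _ _
  · exact (sum_insert hI).le

lemma totalCost_insert_erase_lt [DecidableEq G.Subgraph] (hI : I ∈ 𝓘)
    (hlt : immCost I' < immCost I) : totalCost (insert I' (𝓘.erase I)) < totalCost 𝓘 :=
  calc totalCost (insert I' (𝓘.erase I))
      ≤ immCost I' + totalCost (𝓘.erase I) := totalCost_insert_le
    _ < immCost I + totalCost (𝓘.erase I) := Nat.add_lt_add_right hlt _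
    _ = totalCost 𝓘 := add_sum_erase 𝓘 immCost hI

variable [Fintype V]

lemma IsFeasible.insert_erase [DecidableEq G.Subgraph] (h𝓘 : IsFeasible r p 𝓘)
    (hI' : IsImmersion r I') (hcost : immCost I' ≤ p)
    (hcover : ∀ x ∈ I.verts, x ∈ I'.verts ∨ ∃ J ∈ 𝓘.erase I, x ∈ J.verts) :
    IsFeasible r p (insert I' (𝓘.erase I)) := by
  refine ⟨forall_mem_insert _ _ _ |>.2 ⟨⟨hI', hcost⟩, fun K hK ↦ h𝓘.1 K (mem_of_mem_erase hK)⟩,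
    fun x ↦ (exists_mem_insert _ _ _).2 ?_⟩
  obtain ⟨K, hK, hxK⟩ := h𝓘.2 x
  obtain rfl | hKI := eq_or_ne K I
  · exact hcover x hxK
  · exact Or.inr ⟨K, mem_erase.2 ⟨hKI, hK⟩, hxK⟩

theorem MinDistOptimal.eq_of_mem_verts_of_isImmLeaf (hopt : MinDistOptimal r p 𝓘) (hI : I ∈ 𝓘)
    (hv : IsImmLeaf r I v) (hJ : J ∈ 𝓘) (hvJ : v ∈ J.verts) : J = I := by
  classical
  by_contra hJI
  obtain ⟨hfeas, hmin⟩ := hopt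
  obtain ⟨hImm, hcost⟩ := hfeas.1 I hI
  have hlt : immCost (I.deleteVerts {v}) < immCost I :=
    immCost_lt_of_edgeSet_ssubset
      (edgeSet_deleteVerts_singleton_ssubset hv.nonempty_neighborSet) (Set.toFinite _)
  have hfeas' : IsFeasible r p (insert (I.deleteVerts {v}) (𝓘.erase I)) := by
    refine hfeas.insert_erase (hImm.deleteVerts_leaf hv) (hlt.le.trans hcost) fun x hxI ↦ ?_
    obtain rfl | hxv := eq_or_ne x v
    · exact Or.inr ⟨J, mem_erase.2 ⟨hJI, hJ⟩, hvJ⟩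
    · exact Or.inl ⟨hxI, hxv⟩
  exact (hmin _ hfeas').not_gt (totalCost_insert_erase_lt hI hlt)

theorem IsFeasible.neighborSet_eq_of_forall_mem_verts (hG : G.IsAcyclic) (h𝓘 : IsFeasible r p 𝓘)
    (hI : I ∈ 𝓘) (hvI : v ∈ I.verts) (hunique : ∀ J ∈ 𝓘, v ∈ J.verts → J = I) :
    I.neighborSet v = G.neighborSet v := by
  refine (I.neighborSet_subset v).antisymm fun w hvw ↦ ?_
  obtain ⟨J, hJ, hwJ⟩ := h𝓘.2 w
  have hsup : IsImmersion r (I ⊔ J) := (h𝓘.1 I hI).1.sup (h𝓘.1 J hJ).1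
  have hadj : (I ⊔ J).Adj v w :=
    isInduced_of_isAcyclic_of_preconnected hG hsup.1.preconnected (Or.inl hvI) (Or.inr hwJ) hvw
  obtain hIvw | hJvw := Subgraph.sup_adj.1 hadj
  · exact hIvw
  · exact hunique J hJ (J.edge_vert hJvw) ▸ hJvw

end Covering

theorem stmt_0 {V : Type*} [Fintype V] (T : SimpleGraph V) (r : V) (p : ℕ)
    (hT : T.IsTree) (hp : 2 * treeHeight T r ≤ p)
    (𝓘 : Finset T.Subgraph) (hopt : MinDistOptimal r p 𝓘) :
    ∀ I ∈ 𝓘, ∀ v : V, IsImmLeaf r I v → IsTreeLeaf T r v := by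
  intro I hI v hv
  have hunique : ∀ J ∈ 𝓘, v ∈ J.verts → J = I :=
    fun J hJ hvJ ↦ hopt.eq_of_mem_verts_of_isImmLeaf hI hv hJ hvJ
  have hneighbors : I.neighborSet v = T.neighborSet v :=
    hopt.1.neighborSet_eq_of_forall_mem_verts hT.isAcyclic hI hv.mem_verts hunique
  exact ⟨hv.1, hneighbors ▸ hv.2⟩
end

section
/- Let T be a finite tree rooted at r with at least one edge, let p ≥ 2·h(T), and let k ≥ 1. There exists an optimal solution of the Min-Time problem with k robots, i.e. a feasible covering 𝓘 together with a partition of 𝓘 into k parts S_1,…,S_k minimizing max_{1≤i≤k} Σ_{I∈S_i} C(I), such that the leaf sets of the immersions of 𝓘 form a partition of the set of leaves of T, i.e. every leaf of every immersion I ∈ 𝓘 is a leaf of T and every leaf of T is a leaf of exactly one immersion of 𝓘. -/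
/-!
A tree has only one path from `r` to a given vertex, so an immersion contains the path from `r` to
each of its vertices. Given a feasible covering `𝓙`, assign every leaf `l` of the tree to one
immersion `f l ∈ 𝓙` containing it, and shrink each `J` in use to the union of the paths from `r` to
the leaves assigned to `J`. The leaves of the result are exactly the leaves assigned to `J`, since
every other vertex `v ≠ r` of the union is interior to a path. The shrunken immersions still cover,
because every path from `r` can be prolonged until it ends at a leaf, and they cost no more, so
shrinking does not increase the makespan. Apply this to an optimal solution.
-/

open SimpleGraph Finset

section RootHull

variable {V : Type*} {G : SimpleGraph V} {r : V} {L : Set V}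

/-- The union of all paths from the root `r` to the vertices of `L`. In a tree this is the least
immersion containing `L`, provided that `L` is nonempty; for `L = ∅` it does not contain `r`. -/
def rootHull (G : SimpleGraph V) (r : V) (L : Set V) : G.Subgraph :=
  ⨆ l ∈ L, ⨆ q : G.Path r l, (q : G.Walk r l).toSubgraph

lemma toSubgraph_le_rootHull {l : V} (hl : l ∈ L) (q : G.Path r l) :
    (q : G.Walk r l).toSubgraph ≤ rootHull G r L :=
  le_iSup₂_of_le l hl (le_iSup (fun q : G.Path r l => (q : G.Walk r l).toSubgraph) q)

lemma mem_verts_rootHull {v : V} :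
    v ∈ (rootHull G r L).verts ↔ ∃ l ∈ L, ∃ q : G.Path r l, v ∈ (q : G.Walk r l).support := by
  simp [rootHull]

lemma isImmersion_of_exists_walk_toSubgraph_le {I : G.Subgraph} (hr : r ∈ I.verts)
    (hI : ∀ v ∈ I.verts, ∃ q : G.Walk r v, q.toSubgraph ≤ I) : IsImmersion r I := by
  refine ⟨(Subgraph.connected_iff_forall_exists_walk_subgraph I).2 ⟨⟨r, hr⟩, ?_⟩, hr⟩
  intro u v hu hv
  obtain ⟨q, hq⟩ := hI u hu
  obtain ⟨q', hq'⟩ := hI v hv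
  exact ⟨q.reverse.append q', by simpa using ⟨hq, hq'⟩⟩

lemma isImmersion_rootHull (hG : G.Preconnected) (hL : L.Nonempty) :
    IsImmersion r (rootHull G r L) := by
  classical
  have hr : r ∈ (rootHull G r L).verts := by
    obtain ⟨l, hl⟩ := hL
    obtain ⟨q⟩ := hG r l
    exact mem_verts_rootHull.2 ⟨l, hl, q.toPath, Walk.start_mem_support _⟩
  refine isImmersion_of_exists_walk_toSubgraph_le hr fun v hv => ?_
  obtain ⟨l, hl, q, hvq⟩ := mem_verts_rootHull.1 hv
  refine ⟨(q : G.Walk r l).takeUntil v hvq, le_trans ?_ (toSubgraph_le_rootHull hl q)⟩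
  conv_rhs => rw [← (q : G.Walk r l).take_spec hvq, Walk.toSubgraph_append]
  exact le_sup_left

lemma IsImmersion.toSubgraph_le (hG : G.IsAcyclic) {I : G.Subgraph} (hI : IsImmersion r I) {v : V}
    (hv : v ∈ I.verts) (q : G.Path r v) : (q : G.Walk r v).toSubgraph ≤ I := by
  classical
  obtain ⟨w, hw⟩ :=
    ((Subgraph.connected_iff_forall_exists_walk_subgraph I).1 hI.1).2 hI.2 hv
  rw [(hG.subsingleton_path r v).elim q w.toPath]
  exact Walk.toSubgraph_bypass_le_toSubgraph.trans hw

lemma IsImmersion.rootHull_le (hG : G.IsAcyclic) {I : G.Subgraph} (hI : IsImmersion r I)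
    (hL : L ⊆ I.verts) : rootHull G r L ≤ I :=
  iSup₂_le fun _ hl => iSup_le (hI.toSubgraph_le hG (hL hl))

lemma IsImmLeaf.mem_of_rootHull {v : V} (hv : IsImmLeaf r (rootHull G r L) v) : v ∈ L := by
  obtain ⟨hvr, hdeg⟩ := hv
  obtain ⟨x, hx⟩ := Set.nonempty_of_ncard_ne_zero (hdeg.trans_ne one_ne_zero)
  obtain ⟨l, hl, q, hvq⟩ := mem_verts_rootHull.1 ((rootHull G r L).edge_vert hx)
  by_contra hvL
  obtain ⟨i, rfl, hi⟩ := Walk.mem_support_iff_exists_getVert.1 hvq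
  have hi_zero : i ≠ 0 := by rintro rfl; simp at hvr
  have hi_length : i ≠ (q : G.Walk r l).length := by rintro rfl; simp [hl] at hvL
  have htwo :=
    q.isPath.ncard_neighborSet_toSubgraph_internal_eq_two hi_zero (hi.lt_of_ne hi_length)
  have hle := Set.ncard_le_ncard
    (Subgraph.neighborSet_subset_of_subgraph (toSubgraph_le_rootHull hl q) _)
    (Set.finite_of_ncard_ne_zero (hdeg.trans_ne one_ne_zero))
  omega

lemma IsTreeLeaf.isImmLeaf {I : G.Subgraph} {v : V} (hv : IsTreeLeaf G r v) (hI : IsImmersion r I)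
    (hvI : v ∈ I.verts) : IsImmLeaf r I v := by
  obtain ⟨hvr, hdeg⟩ := hv
  have hfin := Set.finite_of_ncard_ne_zero (hdeg.trans_ne one_ne_zero)
  have hsub := I.neighborSet_subset v
  have : Nontrivial I.verts := ⟨⟨v, hvI⟩, ⟨r, hI.2⟩, by simpa using hvr⟩
  have hne : (I.neighborSet v).Nonempty := hI.1.preconnected.exists_adj_of_nontrivial ⟨v, hvI⟩
  exact ⟨hvr, le_antisymm (hdeg ▸ Set.ncard_le_ncard hsub hfin)
    ((Set.ncard_pos (hfin.subset hsub)).2 hne)⟩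

lemma isImmLeaf_rootHull_iff (hG : G.Preconnected) (hL : ∀ l ∈ L, IsTreeLeaf G r l) {v : V} :
    IsImmLeaf r (rootHull G r L) v ↔ v ∈ L := by
  classical
  refine ⟨IsImmLeaf.mem_of_rootHull, fun hv => ?_⟩
  obtain ⟨q⟩ := hG r v
  exact (hL v hv).isImmLeaf (isImmersion_rootHull hG ⟨v, hv⟩)
    (mem_verts_rootHull.2 ⟨v, hv, q.toPath, Walk.end_mem_support _⟩)

end RootHull

section PathsToLeaves

variable {V : Type*} {G : SimpleGraph V} {r : V} [Nontrivial V]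

lemma exists_adj_notMem_support_of_not_isTreeLeaf (hG : G.IsTree) {u : V} (hu : ¬ IsTreeLeaf G r u)
    {q : G.Walk r u} (hq : q.IsPath) : ∃ w, G.Adj u w ∧ w ∉ q.support := by
  obtain ⟨x, hx⟩ := hG.connected.preconnected.exists_adj_of_nontrivial u
  by_contra! hsupp
  -- Every neighbour of `u` then precedes `u` on `q`, so it is the penultimate vertex of `q`.
  have hpen : ∀ w, G.Adj u w → w = q.penultimate := fun w hw =>
    hG.isAcyclic.eq_penultimate_of_adj_end hq hw (hsupp w hw)
  have hnbr : G.neighborSet u = {x} :=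
    Set.eq_singleton_iff_unique_mem.2 ⟨hx, fun w hw => (hpen w hw).trans (hpen x hx).symm⟩
  refine hu ⟨?_, by rw [hnbr, Set.ncard_singleton]⟩
  rintro rfl
  have hnil : q = Walk.nil := by simpa using hq
  exact hx.ne (by simpa [hnil, eq_comm] using hsupp x hx)

lemma exists_isTreeLeaf_path_support_subset [Finite V] (hG : G.IsTree) {u : V} (q : G.Path r u) :
    ∃ l, IsTreeLeaf G r l ∧
      ∃ q' : G.Path r l, (q : G.Walk r u).support ⊆ (q' : G.Walk r l).support := by
  by_cases hu : IsTreeLeaf G r u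
  · exact ⟨u, hu, q, List.Subset.refl _⟩
  · obtain ⟨w, hadj, hw⟩ := exists_adj_notMem_support_of_not_isTreeLeaf hG hu q.isPath
    obtain ⟨l, hl, q', hq'⟩ :=
      exists_isTreeLeaf_path_support_subset hG
        ⟨(q : G.Walk r u).concat hadj, q.isPath.concat hw hadj⟩
    refine ⟨l, hl, q', fun v hv => hq' ?_⟩
    simp [Walk.support_concat, hv]
termination_by Nat.card V - (q : G.Walk r u).length
decreasing_by
  cases nonempty_fintype V
  have := q.isPath.length_lt
  rw [Nat.card_eq_fintype_card, Walk.length_concat]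
  omega

end PathsToLeaves

section LeafPartition

variable {V α : Type*} {G : SimpleGraph V} {r : V}

/-- The leaf sets of the immersions in `𝓘` partition the set of leaves of the rooted graph. -/
def HasLeafPartition (r : V) (𝓘 : Finset G.Subgraph) : Prop :=
  (∀ I ∈ 𝓘, ∀ v : V, IsImmLeaf r I v → IsTreeLeaf G r v) ∧
    ∀ l : V, IsTreeLeaf G r l → ∃! I : G.Subgraph, I ∈ 𝓘 ∧ IsImmLeaf r I l

/-- The hull of the leaves carrying label `a` under the labelling `f` of the vertices. -/
def leafClassHull (G : SimpleGraph V) (r : V) (f : V → α) (a : α) : G.Subgraph :=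
  rootHull G r {l | IsTreeLeaf G r l ∧ f l = a}

/-- The hulls of the nonempty classes of leaves under the labelling `f`. -/
noncomputable def leafClassHulls [Finite V] (G : SimpleGraph V) (r : V) (f : V → α) :
    Finset G.Subgraph :=
  (Set.toFinite ((fun l => leafClassHull G r f (f l)) '' {l | IsTreeLeaf G r l})).toFinset

lemma isImmLeaf_leafClassHull_iff (hG : G.Preconnected) {f : V → α} {a : α} {v : V} :
    IsImmLeaf r (leafClassHull G r f a) v ↔ IsTreeLeaf G r v ∧ f v = a :=
  isImmLeaf_rootHull_iff hG fun _ hl => hl.1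

lemma leafClassHull_le (hG : G.IsAcyclic) {f : V → G.Subgraph} (hf : ∀ v, v ∈ (f v).verts)
    {J : G.Subgraph} (hJ : IsImmersion r J) : leafClassHull G r f J ≤ J :=
  hJ.rootHull_le hG fun l hl => hl.2 ▸ hf l

variable [Finite V]

lemma mem_leafClassHulls {f : V → α} {I : G.Subgraph} :
    I ∈ leafClassHulls G r f ↔ ∃ l, IsTreeLeaf G r l ∧ leafClassHull G r f (f l) = I := by
  simp [leafClassHulls]

lemma isImmersion_of_mem_leafClassHulls (hG : G.Preconnected) {f : V → α} {I : G.Subgraph}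
    (hI : I ∈ leafClassHulls G r f) : IsImmersion r I := by
  obtain ⟨l, hl, rfl⟩ := mem_leafClassHulls.1 hI
  exact isImmersion_rootHull hG ⟨l, hl, rfl⟩

lemma hasLeafPartition_leafClassHulls (hG : G.Preconnected) (f : V → α) :
    HasLeafPartition r (leafClassHulls G r f) := by
  refine ⟨fun I hI v hv => ?_, fun l hl => ⟨leafClassHull G r f (f l), ⟨?_, ?_⟩, ?_⟩⟩
  · obtain ⟨m, -, rfl⟩ := mem_leafClassHulls.1 hI
    exact ((isImmLeaf_leafClassHull_iff hG).1 hv).1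
  · exact mem_leafClassHulls.2 ⟨l, hl, rfl⟩
  · exact (isImmLeaf_leafClassHull_iff hG).2 ⟨hl, rfl⟩
  · rintro I ⟨hI, hlI⟩
    obtain ⟨m, -, rfl⟩ := mem_leafClassHulls.1 hI
    rw [((isImmLeaf_leafClassHull_iff hG).1 hlI).2]

lemma exists_mem_leafClassHulls_mem_verts [Nontrivial V] (hG : G.IsTree) (f : V → α) (v : V) :
    ∃ I ∈ leafClassHulls G r f, v ∈ I.verts := by
  classical
  obtain ⟨q⟩ := hG.connected.preconnected r v
  obtain ⟨l, hl, q', hq'⟩ := exists_isTreeLeaf_path_support_subset hG q.toPath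
  exact ⟨leafClassHull G r f (f l), mem_leafClassHulls.2 ⟨l, hl, rfl⟩,
    mem_verts_rootHull.2 ⟨l, ⟨hl, rfl⟩, q', hq' (Walk.end_mem_support _)⟩⟩

end LeafPartition

section Makespan

variable {V : Type*} {G : SimpleGraph V} {r : V} {p k : ℕ}

lemma immCost_mono [Finite V] {I J : G.Subgraph} (h : I ≤ J) : immCost I ≤ immCost J :=
  Nat.mul_le_mul_left 2 (Set.ncard_le_ncard (Subgraph.edgeSet_mono h) (Set.toFinite _))

lemma immCost_toSubgraph_le {u v : V} (q : G.Walk u v) :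
    immCost q.toSubgraph ≤ 2 * q.length := by
  classical
  have hedges : q.toSubgraph.edgeSet = (q.edges.toFinset : Set (Sym2 V)) := by
    rw [Walk.edgeSet_toSubgraph, Walk.coe_edges_toFinset]
  rw [immCost, hedges, Set.ncard_coe_finset, ← q.length_edges]
  exact Nat.mul_le_mul_left 2 q.edges.toFinset_card_le

lemma makespan_comp_le {𝓘 𝓙 : Finset G.Subgraph} {g : G.Subgraph → G.Subgraph}
    (b : G.Subgraph → Fin k) (hmaps : Set.MapsTo g 𝓘 𝓙) (hinj : Set.InjOn g 𝓘)
    (hcost : ∀ I ∈ 𝓘, immCost I ≤ immCost (g I)) :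
    makespan k 𝓘 (b ∘ g) ≤ makespan k 𝓙 b := by
  classical
  refine Finset.sup_mono_fun fun i _ => ?_
  have himage : (𝓘.filter fun I => b (g I) = i).image g ⊆ 𝓙.filter fun J => b J = i := by
    intro J hJ
    obtain ⟨I, hI, rfl⟩ := Finset.mem_image.1 hJ
    rw [Finset.mem_filter] at hI ⊢
    exact ⟨hmaps hI.1, hI.2⟩
  calc ∑ I ∈ 𝓘.filter (fun I => b (g I) = i), immCost I
      ≤ ∑ I ∈ 𝓘.filter (fun I => b (g I) = i), immCost (g I) :=
        Finset.sum_le_sum fun I hI => hcost I (Finset.mem_filter.1 hI).1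
    _ = ∑ J ∈ (𝓘.filter fun I => b (g I) = i).image g, immCost J :=
        (Finset.sum_image (hinj.mono (Finset.filter_subset _ _))).symm
    _ ≤ ∑ J ∈ 𝓙.filter (fun J => b J = i), immCost J := Finset.sum_le_sum_of_subset himage

variable [Fintype V]

lemma exists_isFeasible (hG : G.Connected) (hp : 2 * treeHeight G r ≤ p) :
    ∃ 𝓙 : Finset G.Subgraph, IsFeasible r p 𝓙 := by
  classical
  choose P hP using hG.exists_walk_length_eq_dist r
  refine ⟨Finset.univ.image fun v => (P v).toSubgraph, fun I hI => ?_, fun v => ?_⟩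
  · obtain ⟨v, -, rfl⟩ := Finset.mem_image.1 hI
    refine ⟨⟨(P v).toSubgraph_connected, (P v).start_mem_verts_toSubgraph⟩, ?_⟩
    calc immCost (P v).toSubgraph ≤ 2 * (P v).length := immCost_toSubgraph_le _
      _ = 2 * G.dist r v := by rw [hP]
      _ ≤ 2 * treeHeight G r :=
        Nat.mul_le_mul_left 2 (Finset.le_sup (f := fun v => G.dist r v) (Finset.mem_univ v))
      _ ≤ p := hp
  · exact ⟨_, Finset.mem_image_of_mem _ (Finset.mem_univ v), (P v).end_mem_verts_toSubgraph⟩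

lemma IsFeasible.exists_minTimeOptimal {𝓙₀ : Finset G.Subgraph} (h𝓙₀ : IsFeasible r p 𝓙₀)
    (hk : 1 ≤ k) :
    ∃ (𝓙 : Finset G.Subgraph) (b : G.Subgraph → Fin k), MinTimeOptimal r p k 𝓙 b := by
  obtain ⟨⟨𝓙, b⟩, h𝓙, hmin⟩ := exists_minimalFor_of_wellFoundedLT
    (fun x : Finset G.Subgraph × (G.Subgraph → Fin k) => IsFeasible r p x.1)
    (fun x => makespan k x.1 x.2) ⟨(𝓙₀, fun _ => ⟨0, hk⟩), h𝓙₀⟩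
  exact ⟨𝓙, b, h𝓙, fun 𝓚 c h𝓚 => (le_total _ _).elim id (hmin (j := (𝓚, c)) h𝓚)⟩

lemma isFeasible_leafClassHulls [Nontrivial V] (hG : G.IsTree) {𝓙 : Finset G.Subgraph}
    (h𝓙 : IsFeasible r p 𝓙) {f : V → G.Subgraph} (hf𝓙 : ∀ v, f v ∈ 𝓙)
    (hf : ∀ v, v ∈ (f v).verts) : IsFeasible r p (leafClassHulls G r f) := by
  refine ⟨fun I hI => ⟨isImmersion_of_mem_leafClassHulls hG.connected.preconnected hI, ?_⟩,
    exists_mem_leafClassHulls_mem_verts hG f⟩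
  obtain ⟨l, -, rfl⟩ := mem_leafClassHulls.1 hI
  obtain ⟨himm, hcost⟩ := h𝓙.1 (f l) (hf𝓙 l)
  exact (immCost_mono (leafClassHull_le hG.isAcyclic hf himm)).trans hcost

lemma IsFeasible.exists_hasLeafPartition_makespan_le [Nontrivial V] (hG : G.IsTree)
    {𝓙 : Finset G.Subgraph} (h𝓙 : IsFeasible r p 𝓙) (b : G.Subgraph → Fin k) :
    ∃ (𝓘 : Finset G.Subgraph) (a : G.Subgraph → Fin k),
      IsFeasible r p 𝓘 ∧ HasLeafPartition r 𝓘 ∧ makespan k 𝓘 a ≤ makespan k 𝓙 b := by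
  choose f hf𝓙 hf using h𝓙.2
  have hsource : ∀ I ∈ leafClassHulls G r f, ∃ J ∈ 𝓙, leafClassHull G r f J = I := by
    intro I hI
    obtain ⟨l, -, rfl⟩ := mem_leafClassHulls.1 hI
    exact ⟨f l, hf𝓙 l, rfl⟩
  choose! g hg𝓙 hg using hsource
  refine ⟨leafClassHulls G r f, b ∘ g, isFeasible_leafClassHulls hG h𝓙 hf𝓙 hf,
    hasLeafPartition_leafClassHulls hG.connected.preconnected f,
    makespan_comp_le b hg𝓙 (Set.LeftInvOn.injOn hg) fun I hI => immCost_mono ?_⟩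
  calc I = leafClassHull G r f (g I) := (hg I hI).symm
    _ ≤ g I := leafClassHull_le hG.isAcyclic hf (h𝓙.1 _ (hg𝓙 I hI)).1

end Makespan

theorem stmt_7 {V : Type*} [Fintype V] (T : SimpleGraph V) (r : V) (p k : ℕ)
    (hT : T.IsTree) (hE : T.edgeSet.Nonempty) (hp : 2 * treeHeight T r ≤ p)
    (hk : 1 ≤ k) :
    ∃ (𝓘 : Finset T.Subgraph) (a : T.Subgraph → Fin k),
      MinTimeOptimal r p k 𝓘 a ∧
      (∀ I ∈ 𝓘, ∀ v : V, IsImmLeaf r I v → IsTreeLeaf T r v) ∧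
      (∀ l : V, IsTreeLeaf T r l → ∃! I : T.Subgraph, I ∈ 𝓘 ∧ IsImmLeaf r I l) := by
  have : Nontrivial V := by
    obtain ⟨⟨x, y⟩, hxy⟩ := hE
    exact ⟨x, y, T.ne_of_adj hxy⟩
  obtain ⟨𝓙₀, h𝓙₀⟩ := exists_isFeasible hT.connected hp
  obtain ⟨𝓙, b, h𝓙, hopt⟩ := h𝓙₀.exists_minTimeOptimal hk
  obtain ⟨𝓘, a, h𝓘, hleaf, hle⟩ := h𝓙.exists_hasLeafPartition_makespan_le hT b
  exact ⟨𝓘, a, ⟨h𝓘, fun 𝓚 c h𝓚 => hle.trans (hopt 𝓚 c h𝓚)⟩, hleaf⟩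
end

section
/- There exist a finite tree T rooted at r, an integer p ≥ 2·h(T), and an integer k ≥ 2 such that every optimal solution (𝓘, S_1,…,S_k) of the Min-Time problem with k robots has total cost Σ_{I∈𝓘} C(I) strictly greater than the optimal value of the Min-Distance problem on the same T, r, p. (For instance, the tree with edges {r,c}, {c,l1}, {c,l2} with p = 6 and k = 2: the unique Min-Distance optimum is the single immersion of cost 6, while the Min-Time optimum is 4, achieved only by two immersions of cost 4 each, with total cost 8.) -/
/-!
Let the root of a tree on `n` vertices be a leaf. Every nontrivial immersion then uses the root
edge, so splitting the tree among several immersions pays for that edge repeatedly: a covering with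
`m` nontrivial immersions costs at least `2 (n - 2 + m)`. If `p ≥ 2 (n - 1)`, the whole tree is an
immersion and Min-Distance is at most `2 (n - 1)`; if moreover `k` immersions of smaller cost cover
the tree, Min-Time is below `2 (n - 1)`, hence forces `m ≥ 2` and total cost at least `2 n`.
Stars rooted at a leaf satisfy both conditions.
-/

open SimpleGraph Finset

section Immersions

variable {V : Type*} {G : SimpleGraph V} {r v : V} {I : G.Subgraph}

lemma isImmersion_toSubgraph (w : G.Walk r v) : IsImmersion r w.toSubgraph :=
  ⟨w.toSubgraph_connected, w.start_mem_verts_toSubgraph⟩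

lemma isImmersion_top (hG : G.Connected) (r : V) : IsImmersion r (⊤ : G.Subgraph) :=
  ⟨Subgraph.connected_iff'.2 (Subgraph.topIso.connected_iff.2 hG), Set.mem_univ r⟩

lemma immCost_toSubgraph_le_s11 (w : G.Walk r v) : immCost w.toSubgraph ≤ 2 * w.length := by
  classical
  have hedges : w.toSubgraph.edgeSet = (w.edges.toFinset : Set (Sym2 V)) := by
    ext e
    simp
  rw [immCost, hedges, Set.ncard_coe_finset, ← w.length_edges]
  exact Nat.mul_le_mul_left 2 w.edges.toFinset_card_le

lemma immCost_top [Fintype V] (hG : G.IsTree) :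
    immCost (⊤ : G.Subgraph) = 2 * (Fintype.card V - 1) := by
  classical
  rw [immCost, Subgraph.edgeSet_top, ← coe_edgeFinset, Set.ncard_coe_finset,
    ← hG.card_edgeFinset, Nat.add_sub_cancel]

lemma IsImmersion.two_mul_ncard_verts_sub_one_le [Finite V] (hI : IsImmersion r I) :
    2 * (I.verts.ncard - 1) ≤ immCost I := by
  have hedges : I.edgeSet.ncard = Nat.card I.coe.edgeSet := by
    rw [← I.image_coe_edgeSet_coe, Set.ncard_image_of_injective _
      (Sym2.map.injective Subtype.val_injective), Nat.card_coe_set_eq]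
  have hcard : I.verts.ncard ≤ I.edgeSet.ncard + 1 :=
    hedges ▸ hI.1.coe.card_vert_le_card_edgeSet_add_one
  rw [immCost]
  omega

lemma treeHeight_lt_card [Fintype V] (hG : G.Connected) (r : V) :
    treeHeight G r < Fintype.card V := by
  refine (Finset.sup_lt_iff (Fintype.card_pos_iff.2 ⟨r⟩)).2 fun v _ ↦ ?_
  obtain ⟨w, hw, hlength⟩ := hG.exists_path_of_dist r v
  exact hlength ▸ hw.length_lt

end Immersions

section Makespan

variable {V : Type*} {G : SimpleGraph V} {k m : ℕ}

lemma immCost_le_makespan {𝓘 : Finset G.Subgraph} (a : G.Subgraph → Fin k) {I : G.Subgraph}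
    (hI : I ∈ 𝓘) : immCost I ≤ makespan k 𝓘 a :=
  calc immCost I ≤ ∑ J ∈ 𝓘 with a J = a I, immCost J :=
        single_le_sum_of_canonicallyOrdered (mem_filter.2 ⟨hI, rfl⟩)
    _ ≤ makespan k 𝓘 a := le_sup (f := fun i ↦ ∑ J ∈ 𝓘 with a J = i, immCost J) (mem_univ _)

open Classical in
lemma exists_makespan_image_le [NeZero k] {F : Fin k → G.Subgraph}
    (hF : ∀ i, immCost (F i) ≤ m) : ∃ a, makespan k (univ.image F) a ≤ m := by
  refine ⟨Function.invFun F, Finset.sup_le fun i _ ↦ ?_⟩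
  have hrobot : {I ∈ univ.image F | Function.invFun F I = i} ⊆ {F i} := by
    intro I hI
    obtain ⟨hIF, rfl⟩ := mem_filter.1 hI
    obtain ⟨j, -, hj⟩ := mem_image.1 hIF
    exact mem_singleton.2 (Function.invFun_eq ⟨j, hj⟩).symm
  calc ∑ I ∈ univ.image F with Function.invFun F I = i, immCost I
      ≤ ∑ I ∈ {F i}, immCost I := sum_le_sum_of_subset hrobot
    _ ≤ m := by simpa only [sum_singleton] using hF i

end Makespan

section Optimality

variable {V : Type*} [Fintype V] {G : SimpleGraph V} {r : V} {p : ℕ} {𝓘 : Finset G.Subgraph}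

lemma MinDistOptimal.totalCost_le (h𝓘 : MinDistOptimal r p 𝓘) (hG : G.IsTree)
    (hp : 2 * (Fintype.card V - 1) ≤ p) : totalCost 𝓘 ≤ 2 * (Fintype.card V - 1) := by
  have htop : IsFeasible r p {(⊤ : G.Subgraph)} := by
    simpa [IsFeasible, immCost_top hG, hp] using isImmersion_top hG.connected r
  calc totalCost 𝓘 ≤ totalCost {⊤} := h𝓘.2 _ htop
    _ = 2 * (Fintype.card V - 1) := by rw [totalCost, sum_singleton, immCost_top hG]

lemma MinTimeOptimal.immCost_le {k m : ℕ} {a : G.Subgraph → Fin k}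
    (h𝓘 : MinTimeOptimal r p k 𝓘 a) {F : Fin k → G.Subgraph} (hF : ∀ i, IsImmersion r (F i))
    (hcover : ∀ v, ∃ i, v ∈ (F i).verts) (hcost : ∀ i, immCost (F i) ≤ m) (hm : m ≤ p)
    {I : G.Subgraph} (hI : I ∈ 𝓘) : immCost I ≤ m := by
  classical
  have : NeZero k := ⟨(a I).pos.ne'⟩
  have hfeasible : IsFeasible r p (univ.image F) := by
    simpa [IsFeasible, hF, hcover] using fun i ↦ (hcost i).trans hm
  obtain ⟨b, hb⟩ := exists_makespan_image_le hcost
  exact (immCost_le_makespan a hI).trans ((h𝓘.2 _ b hfeasible).trans hb)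

end Optimality

section LeafRoot

variable {V : Type*} {G : SimpleGraph V} {r c : V} {p : ℕ}

lemma IsImmersion.adj_of_nontrivial {I : G.Subgraph} (hI : IsImmersion r I)
    (hI' : I.verts.Nontrivial) (hr : ∀ v, G.Adj r v → v = c) : I.Adj r c := by
  have := hI'.coe_sort
  obtain ⟨v, hv⟩ := hI.1.preconnected.exists_adj_of_nontrivial ⟨r, hI.2⟩
  exact hr v hv.adj_sub ▸ hv

variable [Fintype V] {𝓘 : Finset G.Subgraph}

open Classical in
lemma IsImmersion.two_mul_card_sdiff_add_one_le {I : G.Subgraph} (hI : IsImmersion r I)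
    (hI' : I.verts.Nontrivial) (hr : ∀ v, G.Adj r v → v = c) :
    2 * (#(I.verts.toFinset \ {r, c}) + 1) ≤ immCost I := by
  have hrc : I.Adj r c := hI.adj_of_nontrivial hI' hr
  have hsub : {r, c} ⊆ I.verts.toFinset := insert_subset (Set.mem_toFinset.2 hI.2)
    (singleton_subset_iff.2 (Set.mem_toFinset.2 hrc.snd_mem))
  have hcard : #(I.verts.toFinset \ {r, c}) + 2 = I.verts.ncard := by
    rw [Set.ncard_eq_toFinset_card', ← card_pair hrc.ne, card_sdiff_add_card_eq_card hsub]
  have hcost := hI.two_mul_ncard_verts_sub_one_le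
  omega

open Classical in
lemma IsFeasible.two_mul_card_sub_two_add_le (h𝓘 : IsFeasible r p 𝓘)
    (hr : ∀ v, G.Adj r v → v = c) :
    2 * (Fintype.card V - 2 + #{I ∈ 𝓘 | I.verts.Nontrivial}) ≤ totalCost 𝓘 := by
  set 𝓝 := {I ∈ 𝓘 | I.verts.Nontrivial}
  have hcover : ({r, c}ᶜ : Finset V) ⊆ 𝓝.biUnion fun I ↦ I.verts.toFinset \ {r, c} := by
    intro v hv
    obtain ⟨I, hI, hvI⟩ := h𝓘.2 v
    have hvr : v ≠ r := by rintro rfl; simp at hv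
    have hI𝓝 : I ∈ 𝓝 := mem_filter.2 ⟨hI, v, hvI, r, (h𝓘.1 I hI).1.2, hvr⟩
    exact mem_biUnion.2 ⟨I, hI𝓝, mem_sdiff.2 ⟨Set.mem_toFinset.2 hvI, mem_compl.1 hv⟩⟩
  have hcard : Fintype.card V - 2 ≤ ∑ I ∈ 𝓝, #(I.verts.toFinset \ {r, c}) :=
    calc Fintype.card V - 2 ≤ #({r, c}ᶜ : Finset V) := by
          rw [card_compl]
          exact Nat.sub_le_sub_left card_le_two _
      _ ≤ _ := (card_le_card hcover).trans card_biUnion_le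
  calc 2 * (Fintype.card V - 2 + #𝓝)
      ≤ 2 * (∑ I ∈ 𝓝, #(I.verts.toFinset \ {r, c}) + #𝓝) := by gcongr
    _ = ∑ I ∈ 𝓝, 2 * (#(I.verts.toFinset \ {r, c}) + 1) := by
      rw [← mul_sum, sum_add_distrib, sum_const, smul_eq_mul, mul_one]
    _ ≤ ∑ I ∈ 𝓝, immCost I := sum_le_sum fun I hI ↦ by
      obtain ⟨hI𝓘, hI'⟩ := mem_filter.1 hI
      exact (h𝓘.1 I hI𝓘).1.two_mul_card_sdiff_add_one_le hI' hr
    _ ≤ totalCost 𝓘 := sum_le_sum_of_subset (filter_subset _ _)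

open Classical in
lemma IsFeasible.one_lt_card_nontrivial (h𝓘 : IsFeasible r p 𝓘)
    (hcost : ∀ I ∈ 𝓘, immCost I < 2 * (Fintype.card V - 1)) :
    1 < #{I ∈ 𝓘 | I.verts.Nontrivial} := by
  have hnontrivial {v : V} (hv : v ≠ r) : ∃ I ∈ 𝓘, v ∈ I.verts ∧ I.verts.Nontrivial := by
    obtain ⟨I, hI, hvI⟩ := h𝓘.2 v
    exact ⟨I, hI, hvI, v, hvI, r, (h𝓘.1 I hI).1.2, hv⟩
  have : Nontrivial V := by
    obtain ⟨I, hI, -⟩ := h𝓘.2 r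
    have hlt := hcost I hI
    exact Fintype.one_lt_card_iff_nontrivial.1 (by omega)
  obtain ⟨v, hv⟩ := exists_ne r
  obtain ⟨I, hI, -, hI'⟩ := hnontrivial hv
  have hIroot := (h𝓘.1 I hI).1
  obtain ⟨w, hwI⟩ : ∃ w, w ∉ I.verts := by
    by_contra! hspan
    have hcard : I.verts.ncard = Fintype.card V := by
      rw [Set.eq_univ_of_forall hspan, Set.ncard_univ, Nat.card_eq_fintype_card]
    exact (hcost I hI).not_ge (hcard ▸ hIroot.two_mul_ncard_verts_sub_one_le)
  obtain ⟨J, hJ, hwJ, hJ'⟩ := hnontrivial (ne_of_mem_of_not_mem hIroot.2 hwI).symm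
  refine one_lt_card.2 ⟨I, mem_filter.2 ⟨hI, hI'⟩, J, mem_filter.2 ⟨hJ, hJ'⟩, ?_⟩
  rintro rfl
  exact hwI hwJ

theorem MinTimeOptimal.totalCost_lt_totalCost {k : ℕ} {a : G.Subgraph → Fin k}
    {𝓙 : Finset G.Subgraph} (h𝓘 : MinTimeOptimal r p k 𝓘 a)
    (h𝓙 : MinDistOptimal r p 𝓙) (hG : G.IsTree) (hr : ∀ v, G.Adj r v → v = c)
    (hp : 2 * (Fintype.card V - 1) ≤ p) {F : Fin k → G.Subgraph}
    (hF : ∀ i, IsImmersion r (F i)) (hcover : ∀ v, ∃ i, v ∈ (F i).verts)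
    (hcost : ∀ i, immCost (F i) < 2 * (Fintype.card V - 1)) : totalCost 𝓙 < totalCost 𝓘 := by
  classical
  have hpos := hcost (a ⊤)
  have hlt : ∀ I ∈ 𝓘, immCost I < 2 * (Fintype.card V - 1) := by
    intro I hI
    have hle := h𝓘.immCost_le hF hcover (fun i ↦ Nat.le_sub_one_of_lt (hcost i)) (by omega) hI
    omega
  have htwo := h𝓘.1.one_lt_card_nontrivial hlt
  calc totalCost 𝓙 ≤ 2 * (Fintype.card V - 1) := h𝓙.totalCost_le hG hp
    _ < 2 * (Fintype.card V - 2 + #{I ∈ 𝓘 | I.verts.Nontrivial}) := by omega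
    _ ≤ totalCost 𝓘 := h𝓘.1.two_mul_card_sub_two_add_le hr

end LeafRoot

section Star

variable {V : Type*} {c r x : V}

/-- The walk from `r` to `x` through the centre `c` of a star; its subgraph is the immersion that
reaches the leaf `x` from the root `r`. -/
def starPath (hr : c ≠ r) (hx : c ≠ x) : (starGraph c).Walk r x :=
  .cons (starGraph_center_adj' hr) (.cons (starGraph_center_adj hx) .nil)

lemma mem_verts_starPath (hr : c ≠ r) (hx : c ≠ x) {v : V} :
    v ∈ (starPath hr hx).toSubgraph.verts ↔ v = r ∨ v = c ∨ v = x := by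
  simp [starPath, or_left_comm, or_comm]

lemma immCost_starPath_le (hr : c ≠ r) (hx : c ≠ x) :
    immCost (starPath hr hx).toSubgraph ≤ 4 :=
  immCost_toSubgraph_le_s11 (starPath hr hx)

lemma eq_center_of_starGraph_adj (hr : c ≠ r) (h : (starGraph c).Adj r x) : x = c :=
  (starGraph_adj.1 h).2.resolve_left hr.symm

end Star

theorem stmt_11_general {k : ℕ} (hk : 2 ≤ k) :
    ∃ (V : Type) (_ : Fintype V) (T : SimpleGraph V) (r : V) (p : ℕ),
      T.IsTree ∧ 2 * treeHeight T r ≤ p ∧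
      ∀ (𝓘 : Finset T.Subgraph) (a : T.Subgraph → Fin k), MinTimeOptimal r p k 𝓘 a →
        ∀ 𝓙 : Finset T.Subgraph, MinDistOptimal r p 𝓙 → totalCost 𝓙 < totalCost 𝓘 := by
  have : NeZero k := ⟨by omega⟩
  have hr : (0 : Fin (k + 2)) ≠ 1 := zero_ne_one
  have hleaf (i : Fin k) : (0 : Fin (k + 2)) ≠ i.succ.succ := (Fin.succ_ne_zero _).symm
  have hcard : Fintype.card (Fin (k + 2)) = k + 2 := Fintype.card_fin _
  have hheight := treeHeight_lt_card (connected_starGraph (0 : Fin (k + 2))) 1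
  refine ⟨Fin (k + 2), inferInstance, starGraph 0, 1, 2 * (k + 1), isTree_starGraph 0, by omega,
    fun 𝓘 a h𝓘 𝓙 h𝓙 ↦ ?_⟩
  refine h𝓘.totalCost_lt_totalCost h𝓙 (isTree_starGraph 0)
    (fun v ↦ eq_center_of_starGraph_adj hr) (by omega)
    (F := fun i ↦ (starPath hr (hleaf i)).toSubgraph) (fun i ↦ isImmersion_toSubgraph _)
    (fun v ↦ ?_) (fun i ↦ (immCost_starPath_le hr (hleaf i)).trans_lt (by omega))
  simp only [mem_verts_starPath]
  induction v using Fin.cases with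
  | zero => exact ⟨0, .inr (.inl rfl)⟩
  | succ v =>
    induction v using Fin.cases with
    | zero => exact ⟨0, .inl rfl⟩
    | succ i => exact ⟨i, .inr (.inr rfl)⟩

theorem stmt_11 :
    ∃ (V : Type) (inst : Fintype V) (T : SimpleGraph V) (r : V) (p k : ℕ),
      T.IsTree ∧ 2 * @treeHeight V inst T r ≤ p ∧ 2 ≤ k ∧
      ∀ (𝓘 : Finset T.Subgraph) (a : T.Subgraph → Fin k),
        @MinTimeOptimal V inst T r p k 𝓘 a →
        ∀ 𝓙 : Finset T.Subgraph, @MinDistOptimal V inst T r p 𝓙 →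
          totalCost 𝓙 < totalCost 𝓘 := by
  obtain ⟨V, inst, T, r, p, hT, hp, hlt⟩ := stmt_11_general le_rfl
  exact ⟨V, inst, T, r, p, 2, hT, hp, le_rfl, hlt⟩
end

section
/- There exist a finite tree T rooted at r and an integer p ≥ 2·h(T) such that no feasible covering 𝓘 of T is simultaneously optimal for the Min-Distance problem and for the Min-Immersions problem; that is, every feasible covering achieving the minimum total cost Σ_{I∈𝓘} C(I) has strictly more immersions than the minimum possible number of immersions. -/
/-!
In a tree, a connected subgraph has one edge fewer than vertices, so half the total cost of a
covering counts the non-root vertices with multiplicity. If the total cost is twice the number of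
edges of the tree, every vertex other than the root therefore lies in exactly one immersion, and
since immersions contain the path from the root to each of their vertices, no branch at the root is
split between immersions.

Take three branches, each a fork with three vertices, and immersions with at most five edges.
Handling each branch separately uses every edge once, and this cannot be done with fewer than three
immersions, because two whole branches need six edges. Yet two immersions suffice if one fork is
split between them, at the price of using the edge to that fork twice.
-/

open SimpleGraph Finset

section Acyclic

variable {V : Type*} {G : SimpleGraph V} {r : V} {I J : G.Subgraph}

theorem immCost_of_isAcyclic [Finite I.verts] (hG : G.IsAcyclic) (hI : I.Connected) :
    immCost I = 2 * (I.verts.ncard - 1) := by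
  have hcard : Nat.card I.coe.edgeSet + 1 = I.verts.ncard :=
    (isTree_iff_connected_and_card.1 ⟨hI.coe, hG.subgraph I⟩).2
  have hedges : I.edgeSet.ncard = Nat.card I.coe.edgeSet := by
    rw [← I.image_coe_edgeSet_coe,
      Set.ncard_image_of_injective _ (Sym2.map.injective Subtype.val_injective),
      Nat.card_coe_set_eq]
  rw [immCost, hedges, ← hcard, Nat.add_sub_cancel]

theorem IsImmersion.exists_isPath (hI : IsImmersion r I) {v : V} (hv : v ∈ I.verts) :
    ∃ q : G.Walk r v, q.IsPath ∧ ∀ u ∈ q.support, u ∈ I.verts := by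
  obtain ⟨q, hq⟩ := hI.1.coe.exists_isPath ⟨r, hI.2⟩ ⟨v, hv⟩
  refine ⟨q.map I.hom, hq.map Subtype.val_injective, fun u hu => ?_⟩
  obtain ⟨u, -, rfl⟩ := List.mem_map.1 (q.support_map I.hom ▸ hu)
  exact u.2

/- One of `v`, `w` lies on the path from `r` to the other. -/
theorem IsImmersion.mem_or_mem_of_adj (hG : G.IsAcyclic) (hI : IsImmersion r I)
    (hJ : IsImmersion r J) {v w : V} (hvw : G.Adj v w) (hv : v ∈ I.verts) (hw : w ∈ J.verts) :
    w ∈ I.verts ∨ v ∈ J.verts := by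
  obtain ⟨q, hq, hqI⟩ := hI.exists_isPath hv
  obtain ⟨q', hq', hqJ⟩ := hJ.exists_isPath hw
  by_cases hwq : w ∈ q.support
  · exact .inl (hqI w hwq)
  · exact .inr <| hqJ v <|
      hG.mem_support_of_ne_mem_support_of_adj_of_isPath hq' hq hvw.symm hwq

end Acyclic

section Covering

variable {V : Type*} [Fintype V] {G : SimpleGraph V} {r : V} {p : ℕ} {𝓘 : Finset G.Subgraph}

open Classical in
theorem totalCost_eq_sum_card_filter (hG : G.IsAcyclic) (h𝓘 : ∀ I ∈ 𝓘, IsImmersion r I) :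
    totalCost 𝓘 = 2 * ∑ v ∈ univ.erase r, #{I ∈ 𝓘 | v ∈ I.verts} := by
  have hcost : ∀ I ∈ 𝓘, immCost I = 2 * #{v ∈ univ.erase r | v ∈ I.verts} := by
    intro I hI
    have hverts : (({v ∈ univ.erase r | v ∈ I.verts} : Finset V) : Set V) = I.verts \ {r} := by
      ext v
      simp [and_comm]
    rw [immCost_of_isAcyclic hG (h𝓘 I hI).1, ← Set.ncard_coe_finset, hverts,
      Set.ncard_sdiff_singleton_of_mem (h𝓘 I hI).2]
  rw [totalCost, sum_congr rfl hcost, ← mul_sum]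
  simp_rw [card_filter]
  rw [sum_comm]

theorem IsFeasible.eq_of_mem_verts (h𝓘 : IsFeasible r p 𝓘) (hG : G.IsAcyclic)
    (hcost : totalCost 𝓘 ≤ 2 * (Fintype.card V - 1)) {v : V} (hv : v ≠ r) {I J : G.Subgraph}
    (hI : I ∈ 𝓘) (hJ : J ∈ 𝓘) (hvI : v ∈ I.verts) (hvJ : v ∈ J.verts) : I = J := by
  classical
  have hcover : ∀ u ∈ univ.erase r, 1 ≤ #{I ∈ 𝓘 | u ∈ I.verts} := fun u _ =>
    card_pos.2 <| (h𝓘.2 u).imp fun _ => mem_filter.2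
  have hsum : ∑ u ∈ univ.erase r, #{I ∈ 𝓘 | u ∈ I.verts} ≤ ∑ u ∈ univ.erase r, 1 := by
    rw [sum_const, card_erase_of_mem (mem_univ r), card_univ, smul_eq_mul, mul_one]
    rw [totalCost_eq_sum_card_filter hG fun I hI => (h𝓘.1 I hI).1] at hcost
    exact Nat.le_of_mul_le_mul_left hcost two_pos
  have hone : 1 = #{I ∈ 𝓘 | v ∈ I.verts} :=
    (sum_eq_sum_iff_of_le hcover).1 ((sum_le_sum hcover).antisymm hsum) v
      (mem_erase.2 ⟨hv, mem_univ v⟩)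
  exact card_le_one.1 hone.ge I (mem_filter.2 ⟨hI, hvI⟩) J (mem_filter.2 ⟨hJ, hvJ⟩)

theorem IsFeasible.exists_subset_verts (h𝓘 : IsFeasible r p 𝓘) (hG : G.IsAcyclic)
    (hcost : totalCost 𝓘 ≤ 2 * (Fintype.card V - 1)) {B : Set V} (hr : r ∉ B)
    (hB : (G.induce B).Connected) : ∃ I ∈ 𝓘, B ⊆ I.verts := by
  obtain ⟨b⟩ := hB.nonempty
  obtain ⟨I, hI, hbI⟩ := h𝓘.2 b
  have hstep : ∀ v w : B, (G.induce B).Adj v w → v.1 ∈ I.verts → w.1 ∈ I.verts := by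
    intro v w hvw hv
    obtain ⟨J, hJ, hw⟩ := h𝓘.2 w
    refine ((h𝓘.1 I hI).1.mem_or_mem_of_adj hG (h𝓘.1 J hJ).1 hvw hv hw).elim id fun hvJ => ?_
    rwa [h𝓘.eq_of_mem_verts hG hcost (ne_of_mem_of_not_mem v.2 hr) hI hJ hv hvJ]
  refine ⟨I, hI, fun v hv => ?_⟩
  obtain ⟨q⟩ := hB.preconnected b ⟨v, hv⟩
  by_contra hvI
  obtain ⟨d, -, hfst, hsnd⟩ := q.exists_boundary_dart {u | u.1 ∈ I.verts} hbI hvI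
  exact hsnd (hstep _ _ d.adj hfst)

theorem IsFeasible.card_le_card_of_connected_induce {ι : Type*} [Fintype ι]
    (h𝓘 : IsFeasible r p 𝓘) (hG : G.IsAcyclic) (hcost : totalCost 𝓘 ≤ 2 * (Fintype.card V - 1))
    {B : ι → Finset V} (hr : ∀ i, r ∉ B i) (hB : ∀ i, (G.induce (B i : Set V)).Connected)
    (hdisj : Pairwise fun i j => Disjoint (B i) (B j))
    (hp : Pairwise fun i j => p < 2 * (#(B i) + #(B j))) : Fintype.card ι ≤ #𝓘 := by
  classical
  choose f hf hBf using fun i => h𝓘.exists_subset_verts hG hcost (hr i) (hB i)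
  refine card_le_card_of_injOn f (fun i _ => hf i) fun i _ j _ hij => ?_
  by_contra hne
  obtain ⟨himm, hle⟩ := h𝓘.1 _ (hf i)
  have hsub : ((B i ∪ B j : Finset V) : Set V) ⊆ (f i).verts \ {r} := by
    rw [coe_union]
    exact Set.subset_sdiff_singleton (Set.union_subset (hBf i) (hij ▸ hBf j))
      fun h => h.elim (hr i) (hr j)
  have hcard : #(B i) + #(B j) ≤ (f i).verts.ncard - 1 := by
    rw [← card_union_of_disjoint (hdisj hne), ← Set.ncard_coe_finset,
      ← Set.ncard_sdiff_singleton_of_mem himm.2]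
    exact Set.ncard_le_ncard hsub
  rw [immCost_of_isAcyclic hG himm.1] at hle
  exact (hp hne).not_ge ((Nat.mul_le_mul_left 2 hcard).trans hle)

end Covering

section InducedCovering

variable {V ι : Type*} [Fintype ι] {G : SimpleGraph V} {S : ι ↪ Finset V}

/-- The set of subgraphs of `G` induced on the members of a family `S` of vertex sets, used to
write down explicit coverings. Injectivity of `S` makes the size and the total cost those of the
indexed family. -/
def inducedCovering (G : SimpleGraph V) (S : ι ↪ Finset V) : Finset G.Subgraph :=
  univ.map ⟨fun i => (⊤ : G.Subgraph).induce (S i), fun i j h =>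
    S.injective (coe_injective (show (S i : Set V) = S j from congrArg Subgraph.verts h))⟩

theorem card_inducedCovering : #(inducedCovering G S) = Fintype.card ι := by
  rw [inducedCovering, card_map, card_univ]

theorem immCost_induce_of_isAcyclic (hG : G.IsAcyclic) {A : Finset V}
    (hA : (G.induce (A : Set V)).Connected) :
    immCost ((⊤ : G.Subgraph).induce A) = 2 * (#A - 1) := by
  have : Finite ((⊤ : G.Subgraph).induce A).verts := A.finite_toSet
  rw [immCost_of_isAcyclic hG (connected_induce_iff.1 hA), Subgraph.induce_verts,
    Set.ncard_coe_finset]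

theorem totalCost_inducedCovering (hG : G.IsAcyclic)
    (hconn : ∀ i, (G.induce (S i : Set V)).Connected) :
    totalCost (inducedCovering G S) = ∑ i, 2 * (#(S i) - 1) := by
  rw [totalCost, inducedCovering, sum_map]
  exact sum_congr rfl fun i _ => immCost_induce_of_isAcyclic hG (hconn i)

theorem isFeasible_inducedCovering [Fintype V] (hG : G.IsAcyclic) {r : V} {p : ℕ}
    (hconn : ∀ i, (G.induce (S i : Set V)).Connected) (hr : ∀ i, r ∈ S i)
    (hp : ∀ i, 2 * (#(S i) - 1) ≤ p) (hcover : ∀ v, ∃ i, v ∈ S i) :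
    IsFeasible r p (inducedCovering G S) := by
  constructor
  · intro I hI
    obtain ⟨i, -, rfl⟩ := mem_map.1 hI
    exact ⟨⟨connected_induce_iff.1 (hconn i), hr i⟩,
      (immCost_induce_of_isAcyclic hG (hconn i)).trans_le (hp i)⟩
  · intro v
    obtain ⟨i, hv⟩ := hcover v
    exact ⟨_, mem_map_of_mem _ (mem_univ i), hv⟩

end InducedCovering

section ParentGraph

variable {V : Type*} {par : V → V} {r : V}

/-- The graph joining every vertex to its parent under `par`. The root of a tree is encoded as a
fixed point of `par`. -/
def parentGraph (par : V → V) : SimpleGraph V :=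
  fromRel fun v w => par v = w

theorem parentGraph_adj {v w : V} :
    (parentGraph par).Adj v w ↔ v ≠ w ∧ (par v = w ∨ par w = v) :=
  fromRel_adj _ v w

theorem parentGraph_adj_parent {v : V} (hv : v ≠ par v) : (parentGraph par).Adj (par v) v :=
  parentGraph_adj.2 ⟨hv.symm, .inr rfl⟩

theorem connected_induce_parentGraph {S : Set V} (hr : r ∈ S) (hS : ∀ v ∈ S, v ≠ r → par v ∈ S)
    (hroot : ∀ v ∈ S, ∃ n, par^[n] v = r) : ((parentGraph par).induce S).Connected := by
  have hreach : ∀ n, ∀ v (hv : v ∈ S), par^[n] v = r →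
      ((parentGraph par).induce S).Reachable ⟨r, hr⟩ ⟨v, hv⟩ := by
    intro n
    induction n with
    | zero => rintro v hv rfl; rfl
    | succ n ih =>
      intro v hv hn
      by_cases hvr : v = r
      · subst hvr; rfl
      have hpar := ih (par v) (hS v hv hvr) hn
      by_cases hfix : v = par v
      · simpa only [← hfix] using hpar
      · exact hpar.trans (Adj.reachable (parentGraph_adj_parent hfix))
  have hbase (v : S) : ((parentGraph par).induce S).Reachable ⟨r, hr⟩ v :=
    (hroot v v.2).elim fun n => hreach n v v.2
  exact (connected_iff _).2 ⟨fun u v => (hbase u).symm.trans (hbase v), ⟨⟨r, hr⟩⟩⟩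

theorem edgeSet_parentGraph_subset (hr : par r = r) :
    (parentGraph par).edgeSet ⊆ (fun v => s(v, par v)) '' {r}ᶜ := by
  intro e he
  induction e with | _ v w
  obtain ⟨hne, rfl | rfl⟩ := parentGraph_adj.1 ((mem_edgeSet _).1 he)
  · exact ⟨v, by rintro rfl; exact hne hr.symm, rfl⟩
  · exact ⟨w, by rintro rfl; exact hne hr, Sym2.eq_swap⟩

theorem isTree_parentGraph [Finite V] (hr : par r = r) (hroot : ∀ v, ∃ n, par^[n] v = r) :
    (parentGraph par).IsTree := by
  have hconn : (parentGraph par).Connected :=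
    (induceUnivIso _).connected_iff.1 <|
      connected_induce_parentGraph (Set.mem_univ r) (fun _ _ _ => Set.mem_univ _) fun v _ => hroot v
  have hedges : Nat.card (parentGraph par).edgeSet ≤ Nat.card V - 1 := by
    rw [Nat.card_coe_set_eq, ← Set.ncard_singleton r, ← Set.ncard_compl]
    exact (Set.ncard_le_ncard (edgeSet_parentGraph_subset hr)).trans Set.ncard_image_le
  have : Nonempty V := ⟨r⟩
  have hpos : 0 < Nat.card V := Nat.card_pos
  exact isTree_iff_connected_and_card.2
    ⟨hconn, le_antisymm (by omega) hconn.card_vert_le_card_edgeSet_add_one⟩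

theorem exists_walk_parentGraph_length_le (par : V → V) (n : ℕ) (v : V) :
    ∃ q : (parentGraph par).Walk v (par^[n] v), q.length ≤ n := by
  induction n generalizing v with
  | zero => exact ⟨.nil, le_rfl⟩
  | succ n ih =>
    obtain ⟨q, hq⟩ := ih (par v)
    by_cases hfix : v = par v
    · exact ⟨q.copy hfix.symm rfl, by simpa using hq.trans n.le_succ⟩
    · exact ⟨.cons (parentGraph_adj_parent hfix).symm q, Nat.succ_le_succ hq⟩

theorem treeHeight_parentGraph_le [Fintype V] {n : ℕ} (hroot : ∀ v, par^[n] v = r) :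
    treeHeight (parentGraph par) r ≤ n := by
  refine Finset.sup_le fun v _ => ?_
  obtain ⟨q, hq⟩ := exists_walk_parentGraph_length_le par n v
  rw [dist_comm, ← hroot v]
  exact (dist_le q).trans hq

end ParentGraph

/-- The parent function of the tree with root `0` and three isomorphic branches `{1, 2, 3}`,
`{4, 5, 6}` and `{7, 8, 9}`, each a child `1`, `4` or `7` of the root followed by two leaves. -/
def forkParent : Fin 10 → Fin 10 := ![0, 0, 1, 1, 0, 4, 4, 0, 7, 7]

/-- The tree `T` of the counterexample: a root with three forks attached to it. -/
abbrev forkTree : SimpleGraph (Fin 10) := parentGraph forkParent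

theorem forkParent_iterate_two (v : Fin 10) : forkParent^[2] v = 0 := by
  revert v; decide

theorem isTree_forkTree : forkTree.IsTree :=
  isTree_parentGraph (r := 0) rfl fun v => ⟨2, forkParent_iterate_two v⟩

theorem connected_induce_forkTree {S : Finset (Fin 10)} (h0 : 0 ∈ S)
    (hS : ∀ v ∈ S, forkParent v ∈ S) : (forkTree.induce (S : Set (Fin 10))).Connected :=
  connected_induce_parentGraph h0 (fun v hv _ => hS v hv) fun v _ => ⟨2, forkParent_iterate_two v⟩

/- The fork `{1, 2, 3}` is split, so the edge from `0` to `1` is used twice. -/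
theorem exists_isFeasible_card_eq_two :
    ∃ 𝓘 : Finset forkTree.Subgraph, IsFeasible 0 10 𝓘 ∧ #𝓘 = 2 := by
  let S : Fin 2 ↪ Finset (Fin 10) := ⟨![{0, 1, 2, 4, 5, 6}, {0, 1, 3, 7, 8, 9}], by decide⟩
  have hr : ∀ i, 0 ∈ S i := by decide
  have hclosed : ∀ i, ∀ v ∈ S i, forkParent v ∈ S i := by decide
  refine ⟨inducedCovering forkTree S, ?_, card_inducedCovering⟩
  exact isFeasible_inducedCovering isTree_forkTree.isAcyclic
    (fun i => connected_induce_forkTree (hr i) (hclosed i)) hr (by decide) (by decide)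

theorem exists_isFeasible_totalCost_eq :
    ∃ 𝓘 : Finset forkTree.Subgraph, IsFeasible 0 10 𝓘 ∧ totalCost 𝓘 = 18 := by
  let S : Fin 3 ↪ Finset (Fin 10) :=
    ⟨![{0, 1, 2, 3}, {0, 4, 5, 6}, {0, 7, 8, 9}], by decide⟩
  have hr : ∀ i, 0 ∈ S i := by decide
  have hclosed : ∀ i, ∀ v ∈ S i, forkParent v ∈ S i := by decide
  have hconn (i : Fin 3) : (forkTree.induce (S i : Set (Fin 10))).Connected :=
    connected_induce_forkTree (hr i) (hclosed i)
  have hG := isTree_forkTree.isAcyclic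
  exact ⟨inducedCovering forkTree S, isFeasible_inducedCovering hG hconn hr (by decide) (by decide),
    (totalCost_inducedCovering hG hconn).trans (by decide)⟩

theorem three_le_card_of_totalCost_le {𝓘 : Finset forkTree.Subgraph} (h𝓘 : IsFeasible 0 10 𝓘)
    (hcost : totalCost 𝓘 ≤ 18) : 3 ≤ #𝓘 := by
  let top : Fin 3 → Fin 10 := ![1, 4, 7]
  let B : Fin 3 → Finset (Fin 10) := ![{1, 2, 3}, {4, 5, 6}, {7, 8, 9}]
  have htop : ∀ i, top i ∈ B i := by decide
  have hclosed : ∀ i, ∀ v ∈ B i, v ≠ top i → forkParent v ∈ B i := by decide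
  have hroot : ∀ i, ∀ v ∈ B i, ∃ n < 2, forkParent^[n] v = top i := by decide
  have hconn (i : Fin 3) : (forkTree.induce (B i : Set (Fin 10))).Connected :=
    connected_induce_parentGraph (htop i) (hclosed i) fun v hv =>
      (hroot i v hv).imp fun _ => And.right
  have hdisj : Pairwise fun i j => Disjoint (B i) (B j) := by unfold Pairwise; decide
  have hp : Pairwise fun i j => 10 < 2 * (#(B i) + #(B j)) := by unfold Pairwise; decide
  have hr : ∀ i, 0 ∉ B i := by decide
  exact h𝓘.card_le_card_of_connected_induce isTree_forkTree.isAcyclic hcost hr hconn hdisj hp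

theorem stmt_13 :
    ∃ (V : Type) (inst : Fintype V) (T : SimpleGraph V) (r : V) (p : ℕ),
      T.IsTree ∧ 2 * @treeHeight V inst T r ≤ p ∧
      ∀ 𝓘 : Finset T.Subgraph, @MinDistOptimal V inst T r p 𝓘 →
        ∀ 𝓙 : Finset T.Subgraph, @MinImmOptimal V inst T r p 𝓙 →
          𝓙.card < 𝓘.card := by
  refine ⟨Fin 10, inferInstance, forkTree, 0, 10, isTree_forkTree, ?_, fun 𝓘 h𝓘 𝓙 h𝓙 => ?_⟩
  · have hheight : treeHeight forkTree 0 ≤ 2 := treeHeight_parentGraph_le forkParent_iterate_two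
    omega
  · obtain ⟨𝓑, h𝓑, hcost⟩ := exists_isFeasible_totalCost_eq
    obtain ⟨𝓐, h𝓐, hcard⟩ := exists_isFeasible_card_eq_two
    calc #𝓙 ≤ #𝓐 := h𝓙.2 𝓐 h𝓐
      _ < 3 := by rw [hcard]; exact Nat.lt_add_one 2
      _ ≤ #𝓘 := three_le_card_of_totalCost_le h𝓘.1 ((h𝓘.2 𝓑 h𝓑).trans_eq hcost)
end
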